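/- Let R be a commutative Noetherian local ring and let M be a finitely generated R-module. Assume that for every totally reflexive R-module X one has Ext^i_R(X, M) = 0 for all i ≥ 1. Then the reducing Gorenstein dimension of M equals the reducing projective dimension of M (as elements of ℕ ∪ {∞}). -/

import Mathlib

open CategoryTheory Pointwise

universe u

variable (R : Type u) [CommRing R]

/-- `Ext^n_R(X, Y) = 0`. -/
def ExtVanish (X Y : Type u) [AddCommGroup X] [Module R X]
    [AddCommGroup Y] [Module R Y] (n : ℕ) : Prop :=
  Subsingleton (((Ext R (ModuleCat.{u} R) n).obj
    (Opposite.op (ModuleCat.of R X))).obj (ModuleCat.of R Y))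

/-- A finitely generated module `X` is totally reflexive if the evaluation map to the
double dual is bijective and `Ext^i(X, R) = 0 = Ext^i(X^*, R)` for all `i ≥ 1`. -/
def IsTotallyReflexive (X : Type u) [AddCommGroup X] [Module R X] : Prop :=
  Module.Finite R X ∧
  Function.Bijective (Module.Dual.eval R X) ∧
  (∀ i : ℕ, 1 ≤ i → ExtVanish R X R i) ∧
  (∀ i : ℕ, 1 ≤ i → ExtVanish R (Module.Dual R X) R i)

/-- `0 → A → B → C → 0` is a short exact sequence. -/
def IsShortExact {A B C : Type u} [AddCommGroup A] [Module R A] [AddCommGroup B] [Module R B]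
    [AddCommGroup C] [Module R C] (f : A →ₗ[R] B) (g : B →ₗ[R] C) : Prop :=
  Function.Injective f ∧ Function.Surjective g ∧ Function.Exact f g

/-- Gorenstein dimension at most `n`: there is a resolution of length `≤ n`
by totally reflexive modules. -/
def GdimLE : ℕ → ModuleCat.{u} R → Prop
  | 0, M => IsTotallyReflexive R M
  | n + 1, M => ∃ (X K : ModuleCat.{u} R) (f : K →ₗ[R] X) (g : X →ₗ[R] M),
      IsTotallyReflexive R X ∧ IsShortExact R f g ∧ GdimLE n K

/-- Projective dimension at most `n`. -/
def PdimLE : ℕ → ModuleCat.{u} R → Prop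
  | 0, M => Module.Finite R M ∧ Module.Projective R M
  | n + 1, M => ∃ (X K : ModuleCat.{u} R) (f : K →ₗ[R] X) (g : X →ₗ[R] M),
      Module.Finite R X ∧ Module.Projective R X ∧ IsShortExact R f g ∧ PdimLE n K

/-- Injective dimension at most `n`. -/
def InjdimLE : ℕ → ModuleCat.{u} R → Prop
  | 0, M => Module.Injective R M
  | n + 1, M => ∃ (I C : ModuleCat.{u} R) (f : M →ₗ[R] I) (g : I →ₗ[R] C),
      Module.Injective R I ∧ IsShortExact R f g ∧ InjdimLE n C

/-- The Gorenstein dimension, as an element of `ℕ∞`. -/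
noncomputable def Gdim (M : ModuleCat.{u} R) : ℕ∞ :=
  sInf {n : ℕ∞ | ∃ m : ℕ, n = (m : ℕ∞) ∧ GdimLE R m M}

/-- The projective dimension, as an element of `ℕ∞`. -/
noncomputable def Pdim (M : ModuleCat.{u} R) : ℕ∞ :=
  sInf {n : ℕ∞ | ∃ m : ℕ, n = (m : ℕ∞) ∧ PdimLE R m M}

/-- A local ring is Gorenstein if it has finite injective dimension over itself. -/
def IsGorensteinRing : Prop :=
  ∃ n : ℕ, InjdimLE R n (ModuleCat.of R R)

/-- `IsSyzygy R n S K` : `S` is an `n`-th syzygy of `K`, i.e. there is an exact sequence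
`0 → S → F_{n-1} → ⋯ → F_0 → K → 0` with each `F_j` finitely generated free. -/
def IsSyzygy : ℕ → ModuleCat.{u} R → ModuleCat.{u} R → Prop
  | 0, S, K => Nonempty (S ≃ₗ[R] K)
  | n + 1, S, K => ∃ (W F : ModuleCat.{u} R) (f : W →ₗ[R] F) (g : F →ₗ[R] K),
      Module.Free R F ∧ Module.Finite R F ∧ IsShortExact R f g ∧ IsSyzygy n S W

/-- One step in a reducing sequence: a short exact sequence
`0 → K^{⊕a} → L → (Ω^n K)^{⊕b} → 0`. -/
def ReducingStep (K L : ModuleCat.{u} R) (a b n : ℕ) : Prop :=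
  ∃ (W : ModuleCat.{u} R) (f : (Fin a → K) →ₗ[R] L) (g : L →ₗ[R] (Fin b → W)),
    IsSyzygy R n W K ∧ IsShortExact R f g

/-- `M` admits a reducing sequence `K_0 = M, K_1, …, K_r` relative to the property `P`,
that is, short exact sequences `0 → K_{i-1}^{⊕a_i} → K_i → (Ω^{n_i}K_{i-1})^{⊕b_i} → 0`
with `a_i, b_i, n_i ≥ 1` and `P (K_r)`. -/
def HasReducingSeq (P : ModuleCat.{u} R → Prop) (M : ModuleCat.{u} R) (r : ℕ) : Prop :=
  ∃ (K : Fin (r + 1) → ModuleCat.{u} R) (a b n : Fin r → ℕ),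
    K 0 = M ∧ (∀ i, Module.Finite R (K i)) ∧
    (∀ i : Fin r, 1 ≤ a i ∧ 1 ≤ b i ∧ 1 ≤ n i ∧
      ReducingStep R (K i.castSucc) (K i.succ) (a i) (b i) (n i)) ∧
    P (K (Fin.last r))

/-- The reducing invariant attached to the finiteness property `P`. -/
noncomputable def ReducingDim (P : ModuleCat.{u} R → Prop) (M : ModuleCat.{u} R) : ℕ∞ :=
  sInf {n : ℕ∞ | ∃ r : ℕ, n = (r : ℕ∞) ∧ HasReducingSeq R P M r}

/-- The reducing Gorenstein dimension. -/
noncomputable def rGdim (M : ModuleCat.{u} R) : ℕ∞ :=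
  ReducingDim R (fun N => ∃ m : ℕ, GdimLE R m N) M

/-- The reducing projective dimension. -/
noncomputable def rPdim (M : ModuleCat.{u} R) : ℕ∞ :=
  ReducingDim R (fun N => ∃ m : ℕ, PdimLE R m N) M

/-- depth of a module over a local ring: `inf { i | Ext^i(k, M) ≠ 0 }`. -/
noncomputable def depth [IsLocalRing R] (M : ModuleCat.{u} R) : ℕ∞ :=
  sInf {n : ℕ∞ | ∃ i : ℕ, n = (i : ℕ∞) ∧
    ¬ ExtVanish R (R ⧸ IsLocalRing.maximalIdeal R) M i}

/-- maximal Cohen-Macaulay: depth equals the Krull dimension of the ring. -/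
def IsMCM [IsLocalRing R] (M : ModuleCat.{u} R) : Prop :=
  (depth R M : WithBot ℕ∞) = ringKrullDim R

/-- torsion-free: every non zero-divisor of `R` is a non zero-divisor on `M`. -/
def IsTorsionFreeModule (M : Type u) [AddCommGroup M] [Module R M] : Prop :=
  ∀ r ∈ nonZeroDivisors R, ∀ m : M, r • m = 0 → m = 0

section helpers
variable {R}

lemma extVanish_iff (X Y : Type u) [AddCommGroup X] [Module R X]
    [AddCommGroup Y] [Module R Y] (n : ℕ) : ExtVanish R X Y (n + 1) ↔
      Subsingleton (Abelian.Ext.{u} (ModuleCat.of R X) (ModuleCat.of R Y) (n + 1)) := by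
  let P := ProjectiveResolution.of (ModuleCat.of R X)
  have h1 : ExtVanish R X Y (n + 1) ↔ ∀ f : P.complex.X (n + 1) ⟶ ModuleCat.of R Y,
      P.complex.d (n + 2) (n + 1) ≫ f = 0 → ∃ g : P.complex.X n ⟶ ModuleCat.of R Y,
        P.complex.d (n + 1) n ≫ g = f := by
    unfold ExtVanish
    rw [← ModuleCat.isZero_iff_subsingleton, (P.isoExt (R := R) (n + 1) (ModuleCat.of R Y)).isZero_iff,
      ← HomologicalComplex.exactAt_iff_isZero_homology,
      HomologicalComplex.exactAt_iff' _ n (n + 1) (n + 2) (by simp) (by simp),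
      ShortComplex.moduleCat_exact_iff]
    rfl
  rw [h1]
  constructor
  · intro h
    refine ⟨fun a b => ?_⟩
    have key : ∀ a : Abelian.Ext.{u} (ModuleCat.of R X) (ModuleCat.of R Y) (n + 1), a = 0 := by
      intro a
      obtain ⟨f, hf, rfl⟩ := P.extMk_surjective a (n + 2) rfl
      exact (P.extMk_eq_zero_iff f (n + 2) rfl hf n rfl).2 (h f hf)
    rw [key a, key b]
  · intro h f hf
    exact (P.extMk_eq_zero_iff f (n + 2) rfl hf n rfl).1 (Subsingleton.elim _ _)

lemma IsShortExact.sc {A B C : Type u} [AddCommGroup A] [Module R A] [AddCommGroup B] [Module R B]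
    [AddCommGroup C] [Module R C] {f : A →ₗ[R] B} {g : B →ₗ[R] C} (h : IsShortExact R f g) :
    ∃ w : ModuleCat.ofHom f ≫ ModuleCat.ofHom g = 0,
      (ShortComplex.mk (ModuleCat.ofHom f) (ModuleCat.ofHom g) w).ShortExact := by
  obtain ⟨h1, h2, h3⟩ := h
  refine ⟨?_, ?_⟩
  · ext x
    exact h3.apply_apply_eq_zero x
  · have : Mono (ModuleCat.ofHom f) := (ModuleCat.mono_iff_injective _).2 h1
    have : Epi (ModuleCat.ofHom g) := (ModuleCat.epi_iff_surjective _).2 h2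
    exact { exact := (ShortComplex.ShortExact.moduleCat_exact_iff_function_exact _).2 h3 }

section les
variable {A B C Y : Type u} [AddCommGroup A] [Module R A] [AddCommGroup B] [Module R B]
    [AddCommGroup C] [Module R C] [AddCommGroup Y] [Module R Y]
    {f : A →ₗ[R] B} {g : B →ₗ[R] C}

lemma ev_mid (h : IsShortExact R f g) (n : ℕ) (hA : ExtVanish R A Y (n + 1))
    (hC : ExtVanish R C Y (n + 1)) : ExtVanish R B Y (n + 1) := by
  rw [extVanish_iff] at *
  obtain ⟨w, hS⟩ := h.sc
  refine subsingleton_of_forall_eq 0 fun x => ?_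
  obtain ⟨y, rfl⟩ := Abelian.Ext.contravariant_sequence_exact₂ hS _ x (hA.elim _ _)
  rw [hC.elim y 0, Abelian.Ext.comp_zero]

lemma ev_right (h : IsShortExact R f g) (n : ℕ) (hA : ExtVanish R A Y (n + 1))
    (hB : ExtVanish R B Y (n + 2)) : ExtVanish R C Y (n + 2) := by
  rw [extVanish_iff] at *
  obtain ⟨w, hS⟩ := h.sc
  refine subsingleton_of_forall_eq 0 fun x => ?_
  obtain ⟨y, rfl⟩ := Abelian.Ext.contravariant_sequence_exact₃ hS _ x (hB.elim _ _)
    (show 1 + (n + 1) = n + 1 + 1 by lia)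
  rw [hA.elim y 0, Abelian.Ext.comp_zero]

lemma ev_left (h : IsShortExact R f g) (n : ℕ) (hB : ExtVanish R B Y (n + 1))
    (hC : ExtVanish R C Y (n + 2)) : ExtVanish R A Y (n + 1) := by
  rw [extVanish_iff] at *
  obtain ⟨w, hS⟩ := h.sc
  refine subsingleton_of_forall_eq 0 fun x => ?_
  obtain ⟨y, rfl⟩ := Abelian.Ext.contravariant_sequence_exact₁ hS _ x
    (show 1 + (n + 1) = n + 1 + 1 by lia) (hC.elim _ _)
  rw [hB.elim y 0, Abelian.Ext.comp_zero]

lemma ev_extend (h : IsShortExact R f g) (hC : ExtVanish R C Y 1) (φ : A →ₗ[R] Y) :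
    ∃ ψ : B →ₗ[R] Y, ψ ∘ₗ f = φ := by
  rw [extVanish_iff] at *
  obtain ⟨w, hS⟩ := h.sc
  obtain ⟨y, hy⟩ := Abelian.Ext.contravariant_sequence_exact₁ hS _
    (Abelian.Ext.mk₀ (ModuleCat.ofHom φ)) (show 1 + 0 = 0 + 1 by lia) (hC.elim _ _)
  obtain ⟨ψ, rfl⟩ := Abelian.Ext.addEquiv₀.symm.surjective y
  refine ⟨ψ.hom, ?_⟩
  rw [Abelian.Ext.addEquiv₀_symm_apply, Abelian.Ext.mk₀_comp_mk₀] at hy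
  have := Abelian.Ext.addEquiv₀.symm.injective hy
  exact congrArg ModuleCat.Hom.hom this

lemma ev_right_one (h : IsShortExact R f g) (hB : ExtVanish R B Y 1)
    (H : ∀ φ : A →ₗ[R] Y, ∃ ψ : B →ₗ[R] Y, ψ ∘ₗ f = φ) : ExtVanish R C Y 1 := by
  rw [extVanish_iff] at *
  obtain ⟨w, hS⟩ := h.sc
  refine subsingleton_of_forall_eq 0 fun x => ?_
  obtain ⟨y, rfl⟩ := Abelian.Ext.contravariant_sequence_exact₃ hS _ x (hB.elim _ _)
    (show 1 + 0 = 0 + 1 by lia)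
  obtain ⟨φ, rfl⟩ := Abelian.Ext.addEquiv₀.symm.surjective y
  obtain ⟨ψ, hψ⟩ := H φ.hom
  have : φ = ModuleCat.ofHom f ≫ ModuleCat.ofHom ψ := by
    ext x
    exact (congrArg (fun l => l x) hψ).symm
  rw [this, Abelian.Ext.addEquiv₀_symm_apply, ← Abelian.Ext.mk₀_comp_mk₀]
  exact hS.extClass_comp_assoc _

lemma ev_comid (h : IsShortExact R f g) (n : ℕ) (hA : ExtVanish R Y A (n + 1))
    (hC : ExtVanish R Y C (n + 1)) : ExtVanish R Y B (n + 1) := by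
  rw [extVanish_iff] at *
  obtain ⟨w, hS⟩ := h.sc
  refine subsingleton_of_forall_eq 0 fun x => ?_
  obtain ⟨y, rfl⟩ := Abelian.Ext.covariant_sequence_exact₂ _ hS x (hC.elim _ _)
  rw [hA.elim y 0, Abelian.Ext.zero_comp]

lemma ev_coleft (h : IsShortExact R f g) (n : ℕ) (hC : ExtVanish R Y C (n + 1))
    (hB : ExtVanish R Y B (n + 2)) : ExtVanish R Y A (n + 2) := by
  rw [extVanish_iff] at *
  obtain ⟨w, hS⟩ := h.sc
  refine subsingleton_of_forall_eq 0 fun x => ?_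
  obtain ⟨y, rfl⟩ := Abelian.Ext.covariant_sequence_exact₁ _ hS x (hB.elim _ _)
    (show (n + 1) + 1 = n + 1 + 1 by lia)
  rw [hC.elim y 0, Abelian.Ext.zero_comp]

lemma ev_proj [Module.Projective R A] (n : ℕ) : ExtVanish R A Y (n + 1) := by
  rw [extVanish_iff]
  have : Projective (ModuleCat.of R A) := (IsProjective.iff_projective A).1 inferInstance
  exact HasProjectiveDimensionLT.subsingleton _ 1 _ (by lia) _

lemma ev_zero [Subsingleton Y] (n : ℕ) : ExtVanish R A Y (n + 1) := by
  rw [extVanish_iff]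
  refine subsingleton_of_forall_eq 0 fun x => ?_
  rw [← Abelian.Ext.comp_mk₀_id x]
  have : 𝟙 (ModuleCat.of R Y) = 0 := by
    ext y
    exact Subsingleton.elim (α := Y) _ _
  rw [this, Abelian.Ext.mk₀_zero, Abelian.Ext.comp_zero]

lemma ev_iso (e : A ≃ₗ[R] B) (n : ℕ) (h : ExtVanish R A Y (n + 1)) :
    ExtVanish R B Y (n + 1) := by
  refine ev_mid (C := PUnit.{u+1}) (f := e.toLinearMap) (g := 0) ?_ n h (ev_proj n)
  refine ⟨e.injective, fun x => ⟨0, Subsingleton.elim _ _⟩, fun y => ?_⟩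
  simp

lemma ev_coiso (e : A ≃ₗ[R] B) (n : ℕ) (h : ExtVanish R Y A (n + 1)) :
    ExtVanish R Y B (n + 1) := by
  refine ev_comid (C := PUnit.{u+1}) (f := e.toLinearMap) (g := 0) ?_ n h (ev_zero n)
  refine ⟨e.injective, fun x => ⟨0, Subsingleton.elim _ _⟩, fun y => ?_⟩
  simp

lemma ev_prod (n : ℕ) (hA : ExtVanish R Y A (n + 1)) (hB : ExtVanish R Y B (n + 1)) :
    ExtVanish R Y (A × B) (n + 1) := by
  refine ev_comid (f := LinearMap.inl R A B) (g := LinearMap.snd R A B)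
    ⟨LinearMap.inl_injective, LinearMap.snd_surjective, ?_⟩ n hA hB
  exact Function.Exact.inl_snd

lemma ev_pi (n : ℕ) (hA : ExtVanish R Y A (n + 1)) (k : ℕ) :
    ExtVanish R Y (Fin k → A) (n + 1) := by
  induction k with
  | zero => exact ev_zero n
  | succ k ih => exact ev_coiso (Fin.consLinearEquiv R (fun _ => A)) n (ev_prod n hA ih)

lemma ev_free (n : ℕ) (hA : ExtVanish R Y R (n + 1)) [Module.Finite R A] [Module.Free R A] :
    ExtVanish R Y A (n + 1) := by
  have e := (Module.Free.chooseBasis R A).equivFun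
  have e2 := LinearEquiv.funCongrLeft R R (Fintype.equivFin (Module.Free.ChooseBasisIndex R A))
  exact ev_coiso (e2.trans e.symm) n (ev_pi n hA _)
end les

lemma exists_factor {B C D : Type u} [AddCommGroup B] [Module R B]
    [AddCommGroup C] [Module R C] [AddCommGroup D] [Module R D] (g : B →ₗ[R] C) (φ : B →ₗ[R] D)
    (hg : Function.Surjective g) (h : LinearMap.ker g ≤ LinearMap.ker φ) :
    ∃ ψ : C →ₗ[R] D, ψ ∘ₗ g = φ := by
  refine ⟨(LinearMap.ker g).liftQ φ h ∘ₗ (g.quotKerEquivOfSurjective hg).symm.toLinearMap, ?_⟩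
  ext x
  have : (g.quotKerEquivOfSurjective hg).symm (g x) = (LinearMap.ker g).mkQ x := by
    rw [LinearEquiv.symm_apply_eq]
    rfl
  simp [this]

/-- Every finite module has a finite free cover. -/
lemma exists_cover (Y : Type u) [AddCommGroup Y] [Module R Y] [Module.Finite R Y] :
    ∃ (n : ℕ) (g : (Fin n → R) →ₗ[R] Y), IsShortExact R (LinearMap.ker g).subtype g := by
  obtain ⟨n, g, hg⟩ := Module.Finite.exists_fin' R Y
  exact ⟨n, g, Subtype.val_injective, hg, LinearMap.exact_subtype_ker_map g⟩

section tr
variable [IsNoetherianRing R]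

lemma tr_proj (X : Type u) [AddCommGroup X] [Module R X] [Module.Finite R X]
    [Module.Projective R X] : IsTotallyReflexive R X := by
  refine ⟨inferInstance, Module.bijective_dual_eval R X, ?_, ?_⟩
  · rintro (_ | i) hi
    · lia
    · exact ev_proj i
  · rintro (_ | i) hi
    · lia
    · exact ev_proj i

lemma tr_dual {X : Type u} [AddCommGroup X] [Module R X] (h : IsTotallyReflexive R X) :
    IsTotallyReflexive R (Module.Dual R X) := by
  obtain ⟨h1, h2, h3, h4⟩ := h
  have : Module.IsReflexive R X := ⟨h2⟩
  refine ⟨inferInstance, Module.bijective_dual_eval R _, h4, ?_⟩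
  rintro (_ | i) hi
  · lia
  · exact ev_iso (Module.evalEquiv R X) i (h3 _ hi)

lemma dual_ses {A B C : Type u} [AddCommGroup A] [Module R A] [AddCommGroup B] [Module R B]
    [AddCommGroup C] [Module R C] {f : A →ₗ[R] B} {g : B →ₗ[R] C} (h : IsShortExact R f g)
    (hC : ExtVanish R C R 1) : IsShortExact R g.dualMap f.dualMap := by
  refine ⟨LinearMap.dualMap_injective_of_surjective h.2.1, fun φ => ev_extend h hC φ, fun φ => ?_⟩
  constructor
  · intro hφ
    have : LinearMap.ker g ≤ LinearMap.ker φ := by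
      intro x hx
      obtain ⟨a, rfl⟩ := (h.2.2 x).1 hx
      exact congrArg (fun l => l a) hφ
    obtain ⟨ψ, hψ⟩ := exists_factor g φ h.2.1 this
    exact ⟨ψ, hψ⟩
  · rintro ⟨ψ, rfl⟩
    ext a
    simp [h.2.2.apply_apply_eq_zero a]

lemma tr_syzygy {Z F Y : Type u} [AddCommGroup Z] [Module R Z] [AddCommGroup F] [Module R F]
    [AddCommGroup Y] [Module R Y] [Module.Finite R F] [Module.Projective R F]
    {f : Z →ₗ[R] F} {g : F →ₗ[R] Y} (h : IsShortExact R f g) (hY : IsTotallyReflexive R Y) :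
    IsTotallyReflexive R Z := by
  obtain ⟨h1, h2, h3, h4⟩ := hY
  have hd := dual_ses h (h3 1 le_rfl)
  refine ⟨Module.Finite.of_injective f h.1, ⟨?_, ?_⟩, ?_, ?_⟩
  · intro x y hxy
    apply h.1
    apply (Module.bijective_dual_eval R F).1
    ext φ
    exact congrArg (fun l => l (f.dualMap φ)) hxy
  · intro φ
    obtain ⟨x, hx⟩ := (Module.bijective_dual_eval R F).2 (f.dualMap.dualMap φ)
    have hgx : g x = 0 := by
      apply h2.1
      ext ψ
      have := congrArg (fun l => l (g.dualMap ψ)) hx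
      have h0 : f.dualMap (g.dualMap ψ) = 0 := hd.2.2.apply_apply_eq_zero ψ
      simpa [LinearMap.dualMap_apply, h0] using this
    obtain ⟨z, rfl⟩ := (h.2.2 x).1 hgx
    refine ⟨z, ?_⟩
    ext ψ
    obtain ⟨χ, rfl⟩ := hd.2.1 ψ
    exact congrArg (fun l => l χ) hx
  · rintro (_ | i) hi
    · lia
    · exact ev_left h i (ev_proj i) (h3 _ (by lia))
  · rintro (_ | _ | i) hi
    · lia
    · refine ev_right_one hd (ev_proj 0) fun φ => ?_
      obtain ⟨y, rfl⟩ := h2.2 φ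
      obtain ⟨x, rfl⟩ := h.2.1 y
      exact ⟨Module.Dual.eval R F x, rfl⟩
    · exact ev_right hd i (h4 _ (by lia)) (ev_proj _)

lemma tr_cosyzygy {X : Type u} [AddCommGroup X] [Module R X] (hX : IsTotallyReflexive R X) :
    ∃ (F X' : ModuleCat.{u} R) (f : X →ₗ[R] F) (g : F →ₗ[R] X'), Module.Finite R F ∧
      Module.Projective R F ∧ IsTotallyReflexive R X' ∧ IsShortExact R f g := by
  have := hX.1
  obtain ⟨n, h, hh⟩ := exists_cover (R := R) (Module.Dual R X)
  have hZ := tr_syzygy hh (tr_dual hX)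
  have hd := dual_ses hh (hX.2.2.2 1 le_rfl)
  refine ⟨ModuleCat.of R (Module.Dual R (Fin n → R)), ModuleCat.of R (Module.Dual R (LinearMap.ker h)),
    h.dualMap ∘ₗ Module.Dual.eval R X, (LinearMap.ker h).subtype.dualMap, ?_, ?_, tr_dual hZ, ?_, ?_, ?_⟩
  · exact inferInstanceAs (Module.Finite R (Module.Dual R (Fin n → R)))
  · exact inferInstanceAs (Module.Projective R (Module.Dual R (Fin n → R)))
  · exact hd.1.comp hX.2.1.1
  · exact hd.2.1
  · intro φ
    refine (hd.2.2 φ).trans ?_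
    constructor
    · rintro ⟨ψ, rfl⟩
      obtain ⟨x, rfl⟩ := hX.2.1.2 ψ
      exact ⟨x, rfl⟩
    · rintro ⟨x, rfl⟩
      exact ⟨_, rfl⟩

lemma tr_ext {A B C : Type u} [AddCommGroup A] [Module R A] [AddCommGroup B] [Module R B]
    [AddCommGroup C] [Module R C] {f : A →ₗ[R] B} {g : B →ₗ[R] C} (h : IsShortExact R f g)
    (hA : IsTotallyReflexive R A) (hC : IsTotallyReflexive R C) : IsTotallyReflexive R B := by
  have hd := dual_ses h (hC.2.2.1 1 le_rfl)
  have hdd := dual_ses hd (hA.2.2.2 1 le_rfl)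
  have fA := hA.1
  have fC := hC.1
  have n1 : ∀ a, Module.Dual.eval R B (f a) = f.dualMap.dualMap (Module.Dual.eval R A a) :=
    fun a => rfl
  have n2 : ∀ b, Module.Dual.eval R C (g b) = g.dualMap.dualMap (Module.Dual.eval R B b) :=
    fun a => rfl
  refine ⟨?_, ⟨?_, ?_⟩, ?_, ?_⟩
  · have : IsNoetherian R B := isNoetherian_of_range_eq_ker f g (by
      ext x; exact (h.2.2 x).symm)
    infer_instance
  · rw [injective_iff_map_eq_zero]
    intro b hb
    have : g b = 0 := hC.2.1.1 (by rw [n2, hb, map_zero, map_zero])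
    obtain ⟨a, rfl⟩ := (h.2.2 b).1 this
    have : a = 0 := hA.2.1.1 (hdd.1 (by rw [← n1, hb, map_zero, map_zero]))
    rw [this, map_zero]
  · intro φ
    obtain ⟨c, hc⟩ := hC.2.1.2 (g.dualMap.dualMap φ)
    obtain ⟨b, rfl⟩ := h.2.1 c
    have : g.dualMap.dualMap (φ - Module.Dual.eval R B b) = 0 := by
      rw [map_sub, ← n2, hc, sub_self]
    obtain ⟨α, hα⟩ := (hdd.2.2 _).1 this
    obtain ⟨a, rfl⟩ := hA.2.1.2 α
    refine ⟨f a + b, ?_⟩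
    rw [map_add, n1, hα, sub_add_cancel]
  · rintro (_ | i) hi
    · lia
    · exact ev_mid h i (hA.2.2.1 _ hi) (hC.2.2.1 _ hi)
  · rintro (_ | i) hi
    · lia
    · exact ev_mid hd i (hC.2.2.2 _ hi) (hA.2.2.2 _ hi)


lemma exists_pushout {K X P G Y : Type u} [AddCommGroup K] [Module R K] [AddCommGroup X] [Module R X]
    [AddCommGroup P] [Module R P] [AddCommGroup G] [Module R G] [AddCommGroup Y] [Module R Y]
    {f : K →ₗ[R] X} {g : X →ₗ[R] G} {i : K →ₗ[R] P} {p : P →ₗ[R] Y}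
    (h : IsShortExact R f g) (h' : IsShortExact R i p) :
    ∃ (Q : ModuleCat.{u} R) (a : X →ₗ[R] Q) (b : Q →ₗ[R] Y) (c : P →ₗ[R] Q) (d : Q →ₗ[R] G),
      IsShortExact R a b ∧ IsShortExact R c d := by
  let S : Submodule R (X × P) := LinearMap.range (f.prod (-i))
  have hb : S ≤ LinearMap.ker (p ∘ₗ LinearMap.snd R X P) := by
    rintro _ ⟨k, rfl⟩
    simp [h'.2.2.apply_apply_eq_zero k]
  have hd : S ≤ LinearMap.ker (g ∘ₗ LinearMap.fst R X P) := by
    rintro _ ⟨k, rfl⟩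
    simp [h.2.2.apply_apply_eq_zero k]
  refine ⟨ModuleCat.of R ((X × P) ⧸ S), S.mkQ ∘ₗ LinearMap.inl R X P, S.liftQ _ hb,
    S.mkQ ∘ₗ LinearMap.inr R X P, S.liftQ _ hd, ⟨?_, ?_, ?_⟩, ⟨?_, ?_, ?_⟩⟩
  · rw [injective_iff_map_eq_zero]
    intro x hx
    obtain ⟨k, hk⟩ := (Submodule.Quotient.mk_eq_zero S).1 hx
    have h1 : f k = x := congrArg Prod.fst hk
    have h2 : -i k = 0 := congrArg Prod.snd hk
    have : k = 0 := h'.1 (by rw [map_zero]; exact neg_eq_zero.1 h2)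
    rw [← h1, this, map_zero]
  · intro y
    obtain ⟨q, rfl⟩ := h'.2.1 y
    exact ⟨S.mkQ (0, q), rfl⟩
  · intro q
    obtain ⟨⟨x, q⟩, rfl⟩ := S.mkQ_surjective q
    constructor
    · intro hq
      obtain ⟨k, rfl⟩ := (h'.2.2 q).1 hq
      refine ⟨x + f k, ?_⟩
      refine (Submodule.Quotient.eq S).2 ⟨k, ?_⟩
      simp
    · rintro ⟨x', hx'⟩
      rw [← hx']
      simp
  · rw [injective_iff_map_eq_zero]
    intro x hx
    obtain ⟨k, hk⟩ := (Submodule.Quotient.mk_eq_zero S).1 hx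
    have h1 : f k = 0 := congrArg Prod.fst hk
    have h2 : -i k = x := congrArg Prod.snd hk
    have : k = 0 := h.1 (by rw [map_zero]; exact h1)
    rw [← h2, this, map_zero, neg_zero]
  · intro y
    obtain ⟨q, rfl⟩ := h.2.1 y
    exact ⟨S.mkQ (q, 0), rfl⟩
  · intro q
    obtain ⟨⟨x, q⟩, rfl⟩ := S.mkQ_surjective q
    constructor
    · intro hq
      obtain ⟨k, rfl⟩ := (h.2.2 x).1 hq
      refine ⟨q + i k, ?_⟩
      refine (Submodule.Quotient.eq S).2 ⟨-k, ?_⟩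
      simp
    · rintro ⟨x', hx'⟩
      rw [← hx']
      simp

lemma exists_quot {P Q G F Y : Type u} [AddCommGroup P] [Module R P] [AddCommGroup Q] [Module R Q]
    [AddCommGroup G] [Module R G] [AddCommGroup F] [Module R F] [AddCommGroup Y] [Module R Y]
    {c : P →ₗ[R] Q} {d : Q →ₗ[R] G} {j : Q →ₗ[R] F} {p : F →ₗ[R] Y}
    (h : IsShortExact R c d) (h' : IsShortExact R j p) :
    ∃ (L : ModuleCat.{u} R) (a : P →ₗ[R] F) (b : F →ₗ[R] L) (s : G →ₗ[R] L) (t : L →ₗ[R] Y),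
      IsShortExact R a b ∧ IsShortExact R s t := by
  let S : Submodule R F := LinearMap.range (j ∘ₗ c)
  have ht : S ≤ LinearMap.ker p := by
    rintro _ ⟨k, rfl⟩
    simp [h'.2.2.apply_apply_eq_zero]
  obtain ⟨s, hs⟩ := exists_factor d (S.mkQ ∘ₗ j) h.2.1 (by
    intro x hx
    obtain ⟨k, rfl⟩ := (h.2.2 x).1 hx
    exact (Submodule.Quotient.mk_eq_zero S).2 ⟨k, rfl⟩)
  have hs' : ∀ x, s (d x) = S.mkQ (j x) := fun x => congrArg (fun l => l x) hs
  refine ⟨ModuleCat.of R (F ⧸ S), j ∘ₗ c, S.mkQ, s, S.liftQ p ht,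
    ⟨h'.1.comp h.1, S.mkQ_surjective, ?_⟩, ⟨?_, ?_, ?_⟩⟩
  · exact LinearMap.exact_map_mkQ_range (j ∘ₗ c)
  · rw [injective_iff_map_eq_zero]
    intro y hy
    obtain ⟨x, rfl⟩ := h.2.1 y
    rw [hs'] at hy
    obtain ⟨k, hk⟩ := (Submodule.Quotient.mk_eq_zero S).1 hy
    rw [← h'.1 hk]
    exact h.2.2.apply_apply_eq_zero k
  · intro y
    obtain ⟨x, rfl⟩ := h'.2.1 y
    exact ⟨S.mkQ x, rfl⟩
  · intro q
    obtain ⟨x, rfl⟩ := S.mkQ_surjective q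
    constructor
    · intro hq
      obtain ⟨k, rfl⟩ := (h'.2.2 x).1 hq
      exact ⟨d k, hs' k⟩
    · rintro ⟨y, hy⟩
      obtain ⟨k, rfl⟩ := h.2.1 y
      rw [← hy, hs']
      exact h'.2.2.apply_apply_eq_zero k

lemma gdim_approx (n : ℕ) : ∀ G : ModuleCat.{u} R, GdimLE R n G →
    ∃ (P X : ModuleCat.{u} R) (f : G →ₗ[R] P) (g : P →ₗ[R] X),
      HasProjectiveDimensionLT P (n + 1) ∧ IsTotallyReflexive R X ∧ IsShortExact R f g := by
  induction n with
  | zero =>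
    intro G hG
    obtain ⟨F, X', f, g, h1, h2, h3, h4⟩ := tr_cosyzygy hG
    have : Projective F := (IsProjective.iff_projective F).1 h2
    exact ⟨F, X', f, g, inferInstance, h3, h4⟩
  | succ n ih =>
    rintro G ⟨X, K, f, g, hX, hfg, hK⟩
    obtain ⟨P, Y, i, p, hP, hY, hip⟩ := ih K hK
    obtain ⟨Q, a, b, c, d, hab, hcd⟩ := exists_pushout hfg hip
    have hQ := tr_ext hab hX hY
    obtain ⟨F, X', j, q, h1, h2, h3, h4⟩ := tr_cosyzygy hQ
    obtain ⟨L, a', b', s, t, hab', hst⟩ := exists_quot hcd h4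
    refine ⟨L, X', s, t, ?_, h3, hst⟩
    obtain ⟨w, hS⟩ := hab'.sc
    have : Projective F := (IsProjective.iff_projective F).1 h2
    have hF : HasProjectiveDimensionLT F (n + 1 + 1) := hasProjectiveDimensionLT_of_ge F 1 _ (by lia)
    exact hS.hasProjectiveDimensionLT_X₃ (n + 1) hP hF

lemma pdimLE_of_lt (n : ℕ) : ∀ G : ModuleCat.{u} R, Module.Finite R G →
    HasProjectiveDimensionLT G (n + 1) → PdimLE R n G := by
  induction n with
  | zero =>
    intro G hG h
    refine ⟨hG, ?_⟩
    have : Projective G := projective_iff_hasProjectiveDimensionLT_one.2 h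
    exact (IsProjective.iff_projective G).2 this
  | succ n ih =>
    intro G hG h
    obtain ⟨k, g, hg⟩ := exists_cover (R := R) G
    refine ⟨ModuleCat.of R (Fin k → R), ModuleCat.of R (LinearMap.ker g), _, g,
      inferInstanceAs (Module.Finite R (Fin k → R)),
      inferInstanceAs (Module.Projective R (Fin k → R)), hg, ?_⟩
    apply ih
    · exact inferInstanceAs (Module.Finite R (LinearMap.ker g))
    · obtain ⟨w, hS⟩ := hg.sc
      have : Projective (ModuleCat.of R (Fin k → R)) :=
        (IsProjective.iff_projective (Fin k → R)).1 inferInstance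
      exact hS.hasProjectiveDimensionLT_X₁ (n + 1)
        (hasProjectiveDimensionLT_of_ge (ModuleCat.of R (Fin k → R)) 1 _ (by lia)) h

lemma gdimLE_of_pdimLE (n : ℕ) : ∀ G : ModuleCat.{u} R, PdimLE R n G → GdimLE R n G := by
  induction n with
  | zero =>
    rintro G ⟨h1, h2⟩
    exact tr_proj G
  | succ n ih =>
    rintro G ⟨X, K, f, g, h1, h2, h3, h4⟩
    exact ⟨X, K, f, g, tr_proj X, h3, ih K h4⟩

/-- The `Ext`-vanishing condition against all totally reflexive modules. -/
def TRPerp (N : Type u) [AddCommGroup N] [Module R N] : Prop :=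
  ∀ X : ModuleCat.{u} R, IsTotallyReflexive R X → ∀ i : ℕ, ExtVanish R X N (i + 1)

lemma pdimLE_of_gdimLE (n : ℕ) (G : ModuleCat.{u} R) (hf : Module.Finite R G)
    (hG : TRPerp (R := R) G) (h : GdimLE R n G) : PdimLE R n G := by
  obtain ⟨P, X, f, g, hP, hX, hfg⟩ := gdim_approx n G h
  obtain ⟨r, hr⟩ := ev_extend hfg (hG X hX 0) LinearMap.id
  have ret : Retract G P :=
    { i := ModuleCat.ofHom f
      r := ModuleCat.ofHom r
      retract := by
        ext x
        exact congrArg (fun l => l x) hr }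
  exact pdimLE_of_lt n G hf (ret.hasProjectiveDimensionLT (n + 1))

lemma TRPerp.syzygy (n : ℕ) : ∀ W K : ModuleCat.{u} R, IsSyzygy R n W K →
    TRPerp (R := R) K → TRPerp (R := R) W := by
  induction n with
  | zero =>
    rintro W K ⟨e⟩ hK X hX i
    exact ev_coiso e.symm i (hK X hX i)
  | succ n ih =>
    rintro W K ⟨V, F, f, g, h1, h2, hfg, hV⟩ hK
    refine ih W V hV ?_
    have key : ∀ X : ModuleCat.{u} R, IsTotallyReflexive R X → ∀ i : ℕ, ExtVanish R X V (i + 2) :=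
      fun X hX i => ev_coleft hfg i (hK X hX i) (ev_free _ (hX.2.2.1 _ (by lia)))
    rintro X hX (_ | i)
    · obtain ⟨F', X', f', g', h1', h2', hX', h'⟩ := tr_cosyzygy hX
      exact ev_left h' 0 (ev_proj 0) (key X' hX' 0)
    · exact key X hX i

lemma TRPerp.step {K L : ModuleCat.{u} R} {a b n : ℕ} (h : ReducingStep R K L a b n)
    (hK : TRPerp (R := R) K) : TRPerp (R := R) L := by
  obtain ⟨W, f, g, hW, hfg⟩ := h
  intro X hX i
  exact ev_comid hfg i (ev_pi i (hK X hX i) a) (ev_pi i (TRPerp.syzygy n W K hW hK X hX i) b)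

end tr
end helpers

theorem stmt7 (R : Type u) [CommRing R] [IsNoetherianRing R] [IsLocalRing R]
    (M : Type u) [AddCommGroup M] [Module R M] [Module.Finite R M]
    (hext : ∀ X : ModuleCat.{u} R, IsTotallyReflexive R X →
      ∀ i : ℕ, 1 ≤ i → ExtVanish R X M i) :
    rGdim R (ModuleCat.of R M) = rPdim R (ModuleCat.of R M) := by
  have h : ∀ r, HasReducingSeq R (fun N => ∃ m : ℕ, GdimLE R m N) (ModuleCat.of R M) r ↔
      HasReducingSeq R (fun N => ∃ m : ℕ, PdimLE R m N) (ModuleCat.of R M) r := by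
    intro r
    constructor
    · rintro ⟨K, a, b, n, h0, hf, hs, m, hm⟩
      have hK : ∀ i, TRPerp (R := R) (K i) := by
        intro i
        induction i using Fin.induction with
        | zero =>
          rw [h0]
          exact fun X hX i => hext X hX (i + 1) (by lia)
        | succ i ih => exact TRPerp.step (hs i).2.2.2 ih
      exact ⟨K, a, b, n, h0, hf, hs, m, pdimLE_of_gdimLE m _ (hf _) (hK _) hm⟩
    · rintro ⟨K, a, b, n, h0, hf, hs, m, hm⟩
      exact ⟨K, a, b, n, h0, hf, hs, m, gdimLE_of_pdimLE m _ hm⟩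
  unfold rGdim rPdim ReducingDim
  simp only [h]
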